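/- arXiv:2407.10535 — 4 statements merged into one kernel-verified Lean document; each statement's English description precedes it below -/
import Mathlib

section
/- Let h : ℝ⁴ → ℝ be smooth, with variables written (u,v,x,y). Suppose that for all (u,v,x,y): ∂_u∂_u h = 0, ∂_u∂_x h = 0, ∂_u∂_y h = 0, and ∂_x∂_y h = 0. Then there exist smooth functions h₁ : ℝ → ℝ, H_X : ℝ² → ℝ and H_Y : ℝ² → ℝ such that h(u,v,x,y) = h₁(v)·u + H_X(v,x) + H_Y(v,y) for all (u,v,x,y). -/
theorem aux_const (g : ℝ → ℝ) (hg : Differentiable ℝ g) (h0 : ∀ t, deriv g t = 0) (a b : ℝ) :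
    g a = g b := is_const_of_deriv_eq_zero hg h0 a b

theorem aux_split (f : ℝ → ℝ → ℝ) (hf : ContDiff ℝ (⊤ : ℕ∞) (fun p : ℝ × ℝ => f p.1 p.2))
    (h0 : ∀ a b : ℝ, deriv (fun t => deriv (fun s => f t s) b) a = 0) (a b : ℝ) :
    f a b = f 0 b + f a 0 - f 0 0 := by
  have hd : Differentiable ℝ (fun p : ℝ × ℝ => f p.1 p.2) := hf.differentiable (by simp)
  have hs : ∀ t, Differentiable ℝ (fun s => f t s) := fun t =>
    hd.comp (by fun_prop : Differentiable ℝ (fun s : ℝ => (t, s)))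
  have key : ∀ t b, deriv (fun s => f t s) b
      = fderiv ℝ (fun p : ℝ × ℝ => f p.1 p.2) (t, b) (0, 1) := by
    intro t b
    have h1 : HasDerivAt (fun s : ℝ => (t, s)) ((0 : ℝ), (1 : ℝ)) b :=
      (hasDerivAt_const b t).prodMk (hasDerivAt_id b)
    exact ((hd (t, b)).hasFDerivAt.comp_hasDerivAt b h1).deriv
  have hdd : ∀ b, Differentiable ℝ (fun t => deriv (fun s => f t s) b) := by
    intro b
    simp only [key]
    have h2 : ContDiff ℝ 1 (fderiv ℝ (fun p : ℝ × ℝ => f p.1 p.2)) :=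
      (contDiff_infty.1 hf 2).fderiv_right (by norm_num)
    have h3 : Differentiable ℝ (fun t : ℝ => fderiv ℝ (fun p : ℝ × ℝ => f p.1 p.2) (t, b)) :=
      (h2.differentiable (by simp)).comp (by fun_prop : Differentiable ℝ (fun t : ℝ => (t, b)))
    exact h3.clm_apply (differentiable_const _)
  have hc : ∀ b, deriv (fun s => f a s) b = deriv (fun s => f 0 s) b := fun b =>
    aux_const _ (hdd b) (fun t => h0 t b) a 0
  have := aux_const (fun s => f a s - f 0 s) ((hs a).sub (hs 0)) (fun t => by
    have := ((hs a t).hasDerivAt.sub (hs 0 t).hasDerivAt).deriv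
    rw [hc, sub_self] at this
    exact this) b 0
  linarith

theorem aux_affine (g : ℝ → ℝ) (hg : ContDiff ℝ (⊤ : ℕ∞) g)
    (h0 : ∀ t, deriv (fun t => deriv (fun s => g s) t) t = 0) (u : ℝ) :
    g u = (g 1 - g 0) * u + g 0 := by
  have hd : Differentiable ℝ g := hg.differentiable (by simp)
  have hdd : Differentiable ℝ (deriv g) := by
    have : ContDiff ℝ 2 g := contDiff_infty.1 hg 2
    exact this.differentiable_deriv_two
  have hc : ∀ t, deriv g t = deriv g 0 := fun t => aux_const _ hdd h0 t 0
  have h1 : ∀ a, g a - deriv g 0 * a = g 0 - deriv g 0 * 0 := fun a =>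
    aux_const (fun s => g s - deriv g 0 * s) (by fun_prop) (fun t => by
      have := ((hd t).hasDerivAt.sub ((hasDerivAt_id t).const_mul (deriv g 0))).deriv
      rw [hc t, mul_one, sub_self] at this
      exact this) a 0
  have h2 := h1 u
  have h3 := h1 1
  have h4 : g 1 - g 0 = deriv g 0 := by linarith
  rw [h4]; linarith

/-- If a smooth function `h(u,v,x,y)` on `ℝ⁴` satisfies
`∂_u∂_u h = 0`, `∂_u∂_x h = 0`, `∂_u∂_y h = 0` and `∂_x∂_y h = 0` everywhere,
then `h(u,v,x,y) = h₁(v)·u + H_X(v,x) + H_Y(v,y)` for smooth `h₁, H_X, H_Y`. -/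
theorem stmt0
    (h : ℝ → ℝ → ℝ → ℝ → ℝ)
    (hsmooth : ContDiff ℝ (⊤ : ℕ∞) (fun p : ℝ × ℝ × ℝ × ℝ => h p.1 p.2.1 p.2.2.1 p.2.2.2))
    (huu : ∀ u v x y : ℝ, deriv (fun t => deriv (fun s => h s v x y) t) u = 0)
    (hux : ∀ u v x y : ℝ, deriv (fun t => deriv (fun s => h t v s y) x) u = 0)
    (huy : ∀ u v x y : ℝ, deriv (fun t => deriv (fun s => h t v x s) y) u = 0)
    (hxy : ∀ u v x y : ℝ, deriv (fun t => deriv (fun s => h u v t s) y) x = 0) :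
    ∃ (h₁ : ℝ → ℝ) (HX HY : ℝ → ℝ → ℝ),
      ContDiff ℝ (⊤ : ℕ∞) h₁ ∧
      ContDiff ℝ (⊤ : ℕ∞) (Function.uncurry HX) ∧
      ContDiff ℝ (⊤ : ℕ∞) (Function.uncurry HY) ∧
      ∀ u v x y : ℝ, h u v x y = h₁ v * u + HX v x + HY v y := by
  have C : ∀ {E : Type} [NormedAddCommGroup E] [NormedSpace ℝ E] (a b c d : E → ℝ),
      ContDiff ℝ (⊤ : ℕ∞) a → ContDiff ℝ (⊤ : ℕ∞) b → ContDiff ℝ (⊤ : ℕ∞) c →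
      ContDiff ℝ (⊤ : ℕ∞) d → ContDiff ℝ (⊤ : ℕ∞) (fun e => h (a e) (b e) (c e) (d e)) := by
    intro E _ _ a b c d ha hb hc hd
    exact hsmooth.comp (ha.prodMk (hb.prodMk (hc.prodMk hd)))
  refine ⟨fun v => h 1 v 0 0 - h 0 v 0 0, fun v x => h 0 v x 0,
    fun v y => h 0 v 0 y - h 0 v 0 0, ?_, ?_, ?_, ?_⟩
  · apply ContDiff.sub <;> apply C <;> fun_prop
  · exact C (fun _ : ℝ × ℝ => 0) (fun p => p.1) (fun p => p.2) (fun _ => 0)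
      (by fun_prop) (by fun_prop) (by fun_prop) (by fun_prop)
  · exact (C (fun _ : ℝ × ℝ => 0) (fun p => p.1) (fun _ => 0) (fun p => p.2)
      (by fun_prop) (by fun_prop) (by fun_prop) (by fun_prop)).sub
      (C (fun _ : ℝ × ℝ => 0) (fun p => p.1) (fun _ => 0) (fun _ => 0)
      (by fun_prop) (by fun_prop) (by fun_prop) (by fun_prop))
  · intro u v x y
    have e1 := aux_split (fun t s => h t v s y)
      (by apply C <;> fun_prop) (fun a b => hux a v b y) u x
    have e2 := aux_split (fun t s => h t v 0 s)
      (by apply C <;> fun_prop) (fun a b => huy a v 0 b) u y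
    have e3 := aux_split (fun t s => h 0 v t s)
      (by apply C <;> fun_prop) (fun a b => hxy 0 v a b) x y
    have e4 := aux_affine (fun t => h t v 0 0)
      (by apply C <;> fun_prop) (fun a => huu a v 0 0) u
    simp only at e1 e2 e3 e4 ⊢
    linarith
end

section
/- Let k > 0 and let c₁, c₂ ∈ ℝ with c₁ > |c₂|. Define h : ℝ → ℝ by h(v) = exp(−v)·(c₁·cosh((1/2)·exp(2v)·√k) + c₂·sinh((1/2)·exp(2v)·√k)). Then h(v) > 0 for all v ∈ ℝ, and h(v)·(1 + k·exp(4v)) − h''(v) = 0 for all v ∈ ℝ. -/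
/-- For `k > 0` and `c₁ > |c₂|`, the function
`h(v) = exp(−v)·(c₁·cosh((1/2)e^{2v}√k) + c₂·sinh((1/2)e^{2v}√k))` is everywhere
positive and satisfies `h(v)(1 + k·e^{4v}) − h''(v) = 0`. -/
theorem stmt9
    (k : ℝ) (hk : 0 < k) (c₁ c₂ : ℝ) (hc : c₁ > |c₂|)
    (h : ℝ → ℝ)
    (hdef : ∀ v : ℝ, h v = Real.exp (-v) *
        (c₁ * Real.cosh ((1 / 2) * Real.exp (2 * v) * Real.sqrt k)
          + c₂ * Real.sinh ((1 / 2) * Real.exp (2 * v) * Real.sqrt k))) :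
    ∀ v : ℝ, 0 < h v ∧ h v * (1 + k * Real.exp (4 * v)) - deriv (deriv h) v = 0 := by
  have hu : ∀ v : ℝ, HasDerivAt (fun v : ℝ => (1 / 2) * Real.exp (2 * v) * Real.sqrt k)
      (Real.exp (2 * v) * Real.sqrt k) v := by
    intro v
    have h2 : HasDerivAt (fun v : ℝ => 2 * v) (2 * 1) v := (hasDerivAt_id v).const_mul 2
    have := (h2.exp.const_mul (1 / 2)).mul_const (Real.sqrt k)
    refine HasDerivAt.congr_deriv this ?_
    ring
  have hE2 : ∀ v : ℝ, HasDerivAt (fun v : ℝ => Real.exp (2 * v)) (Real.exp (2 * v) * (2 * 1)) v :=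
    fun v => ((hasDerivAt_id v).const_mul 2).exp
  have hE : ∀ v : ℝ, HasDerivAt (fun v : ℝ => Real.exp (-v)) (Real.exp (-v) * (-1)) v :=
    fun v => ((hasDerivAt_id v).neg).exp
  have hC : ∀ a b v : ℝ, HasDerivAt (fun v : ℝ =>
        a * Real.cosh ((1 / 2) * Real.exp (2 * v) * Real.sqrt k)
          + b * Real.sinh ((1 / 2) * Real.exp (2 * v) * Real.sqrt k))
      (a * (Real.sinh ((1 / 2) * Real.exp (2 * v) * Real.sqrt k) * (Real.exp (2 * v) * Real.sqrt k))
        + b * (Real.cosh ((1 / 2) * Real.exp (2 * v) * Real.sqrt k)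
          * (Real.exp (2 * v) * Real.sqrt k))) v :=
    fun a b v => ((hu v).cosh.const_mul a).add ((hu v).sinh.const_mul b)
  have hh : h = fun v => Real.exp (-v) *
        (c₁ * Real.cosh ((1 / 2) * Real.exp (2 * v) * Real.sqrt k)
          + c₂ * Real.sinh ((1 / 2) * Real.exp (2 * v) * Real.sqrt k)) := funext hdef
  have hd : deriv h = fun v => Real.exp (-v) * (Real.sqrt k * (Real.exp (2 * v) *
        (c₂ * Real.cosh ((1 / 2) * Real.exp (2 * v) * Real.sqrt k)
          + c₁ * Real.sinh ((1 / 2) * Real.exp (2 * v) * Real.sqrt k)))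
        - (c₁ * Real.cosh ((1 / 2) * Real.exp (2 * v) * Real.sqrt k)
          + c₂ * Real.sinh ((1 / 2) * Real.exp (2 * v) * Real.sqrt k))) := by
    funext v
    rw [hh]
    refine (((hE v).mul (hC c₁ c₂ v)).deriv).trans ?_
    ring
  intro v
  constructor
  · rw [hdef]
    apply mul_pos (Real.exp_pos _)
    rw [Real.cosh_eq, Real.sinh_eq]
    generalize (1 / 2) * Real.exp (2 * v) * Real.sqrt k = u
    obtain ⟨h1, h2⟩ := abs_lt.mp hc
    have p1 := mul_pos (by linarith : 0 < c₁ + c₂) (Real.exp_pos u)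
    have p2 := mul_pos (by linarith : 0 < c₁ - c₂) (Real.exp_pos (-u))
    linarith
  · have h4 : Real.exp (4 * v) = Real.exp (2 * v) * Real.exp (2 * v) := by
      rw [← Real.exp_add]; ring_nf
    have hs : k = Real.sqrt k * Real.sqrt k := (Real.mul_self_sqrt hk.le).symm
    have key := ((hE v).mul ((((hE2 v).mul (hC c₂ c₁ v)).const_mul (Real.sqrt k)).sub
      (hC c₁ c₂ v))).deriv
    rw [hd, hdef, h4]
    refine (congrArg₂ (· - ·) rfl key).trans ?_
    dsimp only [Pi.mul_apply, Pi.sub_apply]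
    generalize Real.cosh _ = C
    generalize Real.sinh _ = S
    generalize Real.exp (2 * v) = E
    generalize Real.exp (-v) = F
    generalize Real.sqrt k = s at *
    subst hs
    ring
end

section
/- Let k > 0 and let h : ℝ → ℝ be twice differentiable with h''(v) = (1 + k·exp(4v))·h(v) for all v ∈ ℝ. Then there exist constants c₁, c₂ ∈ ℝ such that h(v) = exp(−v)·(c₁·cosh((1/2)·√k·exp(2v)) + c₂·sinh((1/2)·√k·exp(2v))) for all v ∈ ℝ. -/
lemma aux_const_s10 (k s : ℝ) (hs : s * s = k) (h : ℝ → ℝ)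
    (hdiff : Differentiable ℝ h) (hdiff' : Differentiable ℝ (deriv h))
    (hode : ∀ v : ℝ, deriv (deriv h) v = (1 + k * Real.exp (4 * v)) * h v) :
    ∃ A : ℝ, ∀ v : ℝ, (deriv h v - h v * (-1 + s * Real.exp (2 * v))) *
      Real.exp (-v + 1 / 2 * s * Real.exp (2 * v)) = A := by
  refine ⟨_, fun v => is_const_of_deriv_eq_zero (𝕜 := ℝ)
    (f := fun v => (deriv h v - h v * (-1 + s * Real.exp (2 * v))) *
      Real.exp (-v + 1 / 2 * s * Real.exp (2 * v))) (by fun_prop) ?_ v 0⟩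
  intro x
  have h1 := (hdiff x).hasDerivAt
  have h2 := (hdiff' x).hasDerivAt
  have e : HasDerivAt (fun v : ℝ => Real.exp (2 * v)) (Real.exp (2 * x) * (2 * 1)) x :=
    ((hasDerivAt_id' x).const_mul 2).exp
  have h3 := (h2.sub (h1.mul ((e.const_mul s).const_add (-1)))).mul
    (((hasDerivAt_id' x).neg.add (e.const_mul (1 / 2 * s))).exp)
  refine h3.deriv.trans ?_
  have e4 : Real.exp (4 * x) = Real.exp (2 * x) * Real.exp (2 * x) := by
    rw [← Real.exp_add]; ring_nf
  rw [hode, e4, ← hs]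
  simp only [Pi.add_apply, Pi.mul_apply, Pi.sub_apply, Pi.neg_apply]
  ring

/-- For `k > 0`, every twice differentiable solution of
`h'' = (1 + k·e^{4v})·h` on `ℝ` has the form
`h(v) = exp(−v)·(c₁·cosh((1/2)√k e^{2v}) + c₂·sinh((1/2)√k e^{2v}))`. -/
theorem stmt10
    (k : ℝ) (hk : 0 < k) (h : ℝ → ℝ)
    (hdiff : Differentiable ℝ h) (hdiff' : Differentiable ℝ (deriv h))
    (hode : ∀ v : ℝ, deriv (deriv h) v = (1 + k * Real.exp (4 * v)) * h v) :
    ∃ c₁ c₂ : ℝ, ∀ v : ℝ,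
      h v = Real.exp (-v) *
        (c₁ * Real.cosh ((1 / 2) * Real.sqrt k * Real.exp (2 * v))
          + c₂ * Real.sinh ((1 / 2) * Real.sqrt k * Real.exp (2 * v))) := by
  have hs : 0 < Real.sqrt k := Real.sqrt_pos.2 hk
  have hss : Real.sqrt k * Real.sqrt k = k := Real.mul_self_sqrt hk.le
  obtain ⟨A, hA⟩ := aux_const_s10 k (Real.sqrt k) hss h hdiff hdiff' hode
  obtain ⟨B, hB⟩ := aux_const_s10 k (-Real.sqrt k) (by linarith [neg_mul_neg (Real.sqrt k) (Real.sqrt k)])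
    h hdiff hdiff' hode
  refine ⟨(B - A) / (2 * Real.sqrt k), (B + A) / (2 * Real.sqrt k), fun v => ?_⟩
  have hA := hA v
  have hB := hB v
  have e2 : Real.exp (2 * v) = Real.exp v * Real.exp v := by
    rw [← Real.exp_add]; ring_nf
  have n2 : Real.exp (-v) * Real.exp v = 1 := by rw [← Real.exp_add]; simp
  rw [Real.exp_add] at hA hB
  rw [Real.cosh_eq, Real.sinh_eq]
  have eB : 1 / 2 * -Real.sqrt k * Real.exp (2 * v) = -(1 / 2 * Real.sqrt k * Real.exp (2 * v)) := by
    ring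
  rw [eB] at hB
  have n3 : Real.exp (-(1 / 2 * Real.sqrt k * Real.exp (2 * v))) *
    Real.exp (1 / 2 * Real.sqrt k * Real.exp (2 * v)) = 1 := by rw [← Real.exp_add]; simp
  generalize Real.exp (-(1 / 2 * Real.sqrt k * Real.exp (2 * v))) = Q at *
  generalize Real.exp (1 / 2 * Real.sqrt k * Real.exp (2 * v)) = P at *
  rw [e2] at hA hB
  generalize Real.exp (-v) = N at *
  generalize Real.exp v = E at *
  generalize Real.sqrt k = s at *
  have key : N * (B * P - A * Q) = 2 * s * h v := by
    rw [← hA, ← hB]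
    calc _ = 2 * s * h v * (N * E) ^ 2 * (Q * P) := by ring
      _ = _ := by rw [n2, n3]; ring
  field_simp
  linarith
end

section
/- Let A ∈ ℝ, let β : ℝ → ℝ, and let F : ℝ³ → ℝ be smooth, with variables written (v,x,y). Suppose that for all (v,x,y): A·∂_x∂_y F + 2·∂_x∂_x F + ∂_y∂_y F = 0, ∂_x∂_y F + A·(2·∂_y∂_y F + ∂_x∂_x F) = 0, and ∂_x∂_x F + ∂_y∂_y F = β(v). Then there exist smooth functions F_x, F_y, F_{xy}, L₁, L₂, L₀ : ℝ → ℝ such that F(v,x,y) = F_x(v)·x² + F_y(v)·y² + F_{xy}(v)·x·y + L₁(v)·x + L₂(v)·y + L₀(v) for all (v,x,y), and moreover F_{xy} = −2A·(2F_y + F_x), (2 − A²)·F_x + (1 − 2A²)·F_y = 0, and β = 2(F_x + F_y). -/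
theorem aux_lin (g : ℝ → ℝ) (c : ℝ) (hg : Differentiable ℝ g) (h : ∀ x, deriv g x = c) (x : ℝ) :
    g x = g 0 + c * x := by
  have hd : ∀ x, HasDerivAt (fun x => g x - c * x) 0 x := by
    intro x
    have h1 := (hg x).hasDerivAt
    rw [h x] at h1
    exact (h1.sub ((hasDerivAt_id x).const_mul c)).congr_deriv (by ring)
  have := is_const_of_deriv_eq_zero (fun x => (hd x).differentiableAt) (fun x => (hd x).deriv) x 0
  simp at this
  linarith

theorem aux_quad (g : ℝ → ℝ) (c : ℝ) (hg : ContDiff ℝ 2 g)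
    (h : ∀ x, deriv (fun t => deriv g t) x = c) (x : ℝ) :
    g x = g 0 + deriv g 0 * x + c / 2 * x ^ 2 := by
  have hg1 : Differentiable ℝ g := hg.differentiable (by norm_num)
  have hg2 : Differentiable ℝ (deriv g) :=
    ((contDiff_succ_iff_deriv (n := 1)).1 hg).2.2.differentiable (by norm_num)
  have hl := aux_lin (deriv g) c hg2 h
  have hd : ∀ x, HasDerivAt (fun x => g x - c / 2 * x ^ 2) (deriv g 0) x := by
    intro x
    have h1 := (hg1 x).hasDerivAt
    refine (h1.sub ((hasDerivAt_pow 2 x).const_mul (c / 2))).congr_deriv ?_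
    rw [hl x]; push_cast; ring
  have := aux_lin _ _ (fun x => (hd x).differentiableAt) (fun x => (hd x).deriv) x
  simp at this
  linarith

/-- If a smooth `F(v,x,y)` satisfies `A·∂_x∂_y F + 2∂_x²F + ∂_y²F = 0`,
`∂_x∂_y F + A(2∂_y²F + ∂_x²F) = 0` and `∂_x²F + ∂_y²F = β(v)`, then `F` is a quadratic
polynomial in `(x,y)` with `v`-dependent smooth coefficients satisfying
`F_{xy} = −2A(2F_y + F_x)`, `(2 − A²)F_x + (1 − 2A²)F_y = 0` and `β = 2(F_x + F_y)`. -/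
theorem stmt13
    (A : ℝ) (β : ℝ → ℝ) (F : ℝ → ℝ → ℝ → ℝ)
    (hsmooth : ContDiff ℝ (⊤ : ℕ∞) (fun p : ℝ × ℝ × ℝ => F p.1 p.2.1 p.2.2))
    (heq1 : ∀ v x y : ℝ,
      A * deriv (fun t => deriv (fun s => F v t s) y) x
        + 2 * deriv (fun t => deriv (fun s => F v s y) t) x
        + deriv (fun t => deriv (fun s => F v x s) t) y = 0)
    (heq2 : ∀ v x y : ℝ,
      deriv (fun t => deriv (fun s => F v t s) y) x
        + A * (2 * deriv (fun t => deriv (fun s => F v x s) t) y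
          + deriv (fun t => deriv (fun s => F v s y) t) x) = 0)
    (hbeta : ∀ v x y : ℝ,
      deriv (fun t => deriv (fun s => F v s y) t) x
        + deriv (fun t => deriv (fun s => F v x s) t) y = β v) :
    ∃ (Fx Fy Fxy L₁ L₂ L₀ : ℝ → ℝ),
      ContDiff ℝ (⊤ : ℕ∞) Fx ∧ ContDiff ℝ (⊤ : ℕ∞) Fy ∧ ContDiff ℝ (⊤ : ℕ∞) Fxy ∧
      ContDiff ℝ (⊤ : ℕ∞) L₁ ∧ ContDiff ℝ (⊤ : ℕ∞) L₂ ∧ ContDiff ℝ (⊤ : ℕ∞) L₀ ∧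
      (∀ v x y : ℝ, F v x y =
        Fx v * x ^ 2 + Fy v * y ^ 2 + Fxy v * x * y + L₁ v * x + L₂ v * y + L₀ v) ∧
      (∀ v : ℝ, Fxy v = -2 * A * (2 * Fy v + Fx v)) ∧
      (∀ v : ℝ, (2 - A ^ 2) * Fx v + (1 - 2 * A ^ 2) * Fy v = 0) ∧
      (∀ v : ℝ, β v = 2 * (Fx v + Fy v)) := by
  have hA : (1 + A ^ 2) ≠ 0 := by positivity
  obtain ⟨P, hPdef⟩ : ∃ P : ℝ → ℝ, ∀ v, (1 + A ^ 2) * P v = -(1 - 2 * A ^ 2) * β v :=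
    ⟨fun v => -(1 - 2 * A ^ 2) * β v / (1 + A ^ 2), fun v => by field_simp⟩
  have hP : ∀ v x y : ℝ, deriv (fun t => deriv (fun s => F v s y) t) x = P v := by
    intro v x y
    apply mul_left_cancel₀ hA
    rw [hPdef]
    linear_combination heq1 v x y - A * heq2 v x y - (1 - 2 * A ^ 2) * hbeta v x y
  have hR : ∀ v x y : ℝ, deriv (fun t => deriv (fun s => F v x s) t) y = β v - P v := by
    intro v x y
    linear_combination hbeta v x y - hP v x y
  have hQ : ∀ v x y : ℝ, deriv (fun t => deriv (fun s => F v t s) y) x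
      = -A * (2 * (β v - P v) + P v) := by
    intro v x y
    have := heq2 v x y
    rw [hP, hR] at this
    linarith
  have hcx : ∀ v y, ContDiff ℝ (⊤ : ℕ∞) (fun s => F v s y) := fun v y =>
    hsmooth.comp (f := fun s : ℝ => (v, s, y)) (by fun_prop)
  have hcy : ∀ v x, ContDiff ℝ (⊤ : ℕ∞) (fun s => F v x s) := fun v x =>
    hsmooth.comp (f := fun s : ℝ => (v, x, s)) (by fun_prop)
  have hcv : ∀ x y, ContDiff ℝ (⊤ : ℕ∞) (fun v => F v x y) := fun x y =>
    hsmooth.comp (f := fun s : ℝ => (s, x, y)) (by fun_prop)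
  have hdy : ∀ v, Differentiable ℝ (fun t => deriv (fun s => F v t s) 0) := by
    intro v
    have he : (fun t => deriv (fun s => F v t s) 0) = fun t =>
        fderiv ℝ (fun p : ℝ × ℝ × ℝ => F p.1 p.2.1 p.2.2) (v, t, 0) (0, 0, 1) := by
      funext t
      have h1 := (hsmooth.differentiable (by simp) (v, t, 0)).hasFDerivAt
      have h2 : HasDerivAt (fun s : ℝ => (v, t, s)) ((0 : ℝ), (0 : ℝ), (1 : ℝ)) 0 :=
        (hasDerivAt_const _ _).prodMk ((hasDerivAt_const _ _).prodMk (hasDerivAt_id _))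
      exact (h1.comp_hasDerivAt (0 : ℝ) h2).deriv
    rw [he]
    have h3 : ContDiff ℝ 1 (fderiv ℝ (fun p : ℝ × ℝ × ℝ => F p.1 p.2.1 p.2.2)) :=
      (contDiff_infty.1 hsmooth 2).fderiv_right (by norm_num)
    have h4 : Differentiable ℝ (fun t : ℝ =>
        fderiv ℝ (fun p : ℝ × ℝ × ℝ => F p.1 p.2.1 p.2.2) (v, t, 0)) :=
      (h3.differentiable (by norm_num)).comp (f := fun t : ℝ => (v, t, (0 : ℝ))) (by fun_prop)
    exact h4.clm_apply (differentiable_const _)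
  have key : ∀ v x y : ℝ, F v x y = P v / 2 * x ^ 2 + (β v - P v) / 2 * y ^ 2
      + (-A * (2 * (β v - P v) + P v)) * x * y + deriv (fun s => F v s 0) 0 * x
      + deriv (fun s => F v 0 s) 0 * y + F v 0 0 := by
    intro v x y
    have h1 := aux_quad (fun s => F v x s) _ (contDiff_infty.1 (hcy v x) 2) (hR v x) y
    have h2 := aux_quad (fun s => F v s 0) _ (contDiff_infty.1 (hcx v 0) 2)
      (fun x => hP v x 0) x
    have h3 := aux_lin _ _ (hdy v) (fun x => hQ v x 0) x
    beta_reduce at h1 h2 h3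
    rw [h1, h2, h3]; ring
  have eP : ∀ v, P v / 2 = (F v 1 0 + F v (-1) 0 - 2 * F v 0 0) / 2 := by
    intro v; rw [key v 1 0, key v (-1) 0]; ring
  have eR : ∀ v, (β v - P v) / 2 = (F v 0 1 + F v 0 (-1) - 2 * F v 0 0) / 2 := by
    intro v; rw [key v 0 1, key v 0 (-1)]; ring
  have eQ : ∀ v, -A * (2 * (β v - P v) + P v) = F v 1 1 - F v 1 0 - F v 0 1 + F v 0 0 := by
    intro v; rw [key v 0 1, key v 1 0, key v 1 1]; ring
  have e1 : ∀ v, deriv (fun s => F v s 0) 0 = (F v 1 0 - F v (-1) 0) / 2 := by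
    intro v; rw [key v 1 0, key v (-1) 0]; ring
  have e2 : ∀ v, deriv (fun s => F v 0 s) 0 = (F v 0 1 - F v 0 (-1)) / 2 := by
    intro v; rw [key v 0 1, key v 0 (-1)]; ring
  have a1 := hcv 1 0
  have a2 := hcv (-1) 0
  have a3 := hcv 0 0
  have a4 := hcv 0 1
  have a5 := hcv 0 (-1)
  have a6 := hcv 1 1
  refine ⟨fun v => P v / 2, fun v => (β v - P v) / 2, fun v => -A * (2 * (β v - P v) + P v),
    fun v => deriv (fun s => F v s 0) 0, fun v => deriv (fun s => F v 0 s) 0, fun v => F v 0 0,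
    ?_, ?_, ?_, ?_, ?_, a3, key, ?_, ?_, ?_⟩
  · simp only [eP]; fun_prop
  · simp only [eR]; fun_prop
  · simp only [eQ]; fun_prop
  · simp only [e1]; fun_prop
  · simp only [e2]; fun_prop
  · intro v; ring
  · intro v; linear_combination hPdef v / 2
  · intro v; ring
end
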